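/- Suppose a design d satisfies Kushner's conditions for universal optimality under the traditional linear crossover model, namely: ∑_{s∈Q} p_s [Ĉ_{s11} + x* Ĉ_{s12}] = (y*/(t−1)) B_t; ∑_{s∈Q} p_s [Ĉ_{s21} + x* Ĉ_{s22}] = 0; ∑_{s∈Q} p_s B̃ (T_s + x* F_s) B_t = 0; ∑_{s∈Q} p_s = 1; and p_s = 0 for every s ∉ Q. Then for every λ0 ∈ ℝ and every exchangeable prior g, d is E_{g,λ0}-optimal for the proportional model. -/

import Mathlib

open Matrix MeasureTheory
open scoped Classical

noncomputable section

/-- A treatment sequence: assigns a treatment in `Fin t` to each period in `Fin p`. -/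
abbrev TrtSeq (p t : ℕ) := Fin p → Fin t

/-- Treatment/period incidence matrix `T_s`. -/
def Tmat {p t : ℕ} (s : TrtSeq p t) : Matrix (Fin p) (Fin t) ℝ :=
  Matrix.of fun k i => if s k = i then 1 else 0

/-- Carryover incidence matrix `F_s`: first row zero, row `k` records the treatment
in period `k-1`. -/
def Fmat {p t : ℕ} (s : TrtSeq p t) : Matrix (Fin p) (Fin t) ℝ :=
  Matrix.of fun k i =>
    if (k : ℕ) = 0 then 0
    else if s ⟨(k : ℕ) - 1, Nat.lt_of_le_of_lt (Nat.sub_le _ _) k.isLt⟩ = i then 1 else 0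

/-- The all-ones `m × m` matrix `J_m`. -/
def Jmat (m : ℕ) : Matrix (Fin m) (Fin m) ℝ := Matrix.of fun _ _ => 1

/-- `B_t = I_t - J_t / t`. -/
def Bmat (t : ℕ) : Matrix (Fin t) (Fin t) ℝ := 1 - ((t : ℝ))⁻¹ • Jmat t

/-- `B̃ = Σ⁻¹ - Σ⁻¹ J_p Σ⁻¹ / (1_p' Σ⁻¹ 1_p)`. -/
def Btil {p : ℕ} (S : Matrix (Fin p) (Fin p) ℝ) : Matrix (Fin p) (Fin p) ℝ :=
  S⁻¹ - (((fun _ => (1 : ℝ)) : Fin p → ℝ) ⬝ᵥ (S⁻¹ *ᵥ fun _ => (1 : ℝ)))⁻¹ •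
    (S⁻¹ * Jmat p * S⁻¹)

/-- `G_1(s) = T_s`, `G_2(s) = F_s`. -/
def Gmat {p t : ℕ} (i : Fin 2) (s : TrtSeq p t) : Matrix (Fin p) (Fin t) ℝ :=
  if i = 0 then Tmat s else Fmat s

/-- An approximate design: nonnegative weights summing to one. -/
def IsDesign {p t : ℕ} (w : TrtSeq p t → ℝ) : Prop :=
  (∀ s, 0 ≤ w s) ∧ ∑ s : TrtSeq p t, w s = 1

/-- `Ĉ_{sij} = B_t G_i(s)' B̃ G_j(s) B_t`. -/
def Chat {p t : ℕ} (S : Matrix (Fin p) (Fin p) ℝ) (s : TrtSeq p t) (i j : Fin 2) :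
    Matrix (Fin t) (Fin t) ℝ :=
  Bmat t * (Gmat i s)ᵀ * Btil S * Gmat j s * Bmat t

/-- `c_{sij} = tr Ĉ_{sij}`. -/
def cseq {p t : ℕ} (S : Matrix (Fin p) (Fin p) ℝ) (s : TrtSeq p t) (i j : Fin 2) : ℝ :=
  (Chat S s i j).trace

/-- `Ĉ_{dij} = n ∑_s p_s Ĉ_{sij}`. -/
def ChatD {p t : ℕ} (n : ℕ) (S : Matrix (Fin p) (Fin p) ℝ) (w : TrtSeq p t → ℝ)
    (i j : Fin 2) : Matrix (Fin t) (Fin t) ℝ :=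
  (n : ℝ) • ∑ s : TrtSeq p t, w s • Chat S s i j

/-- `C_{dij} = Ĉ_{dij} - n (∑_s p_s G_i(s) B_t)' B̃ (∑_s p_s G_j(s) B_t)`. -/
def CD {p t : ℕ} (n : ℕ) (S : Matrix (Fin p) (Fin p) ℝ) (w : TrtSeq p t → ℝ)
    (i j : Fin 2) : Matrix (Fin t) (Fin t) ℝ :=
  ChatD n S w i j -
    (n : ℝ) • ((∑ s : TrtSeq p t, w s • (Gmat i s * Bmat t))ᵀ * Btil S *
      (∑ s : TrtSeq p t, w s • (Gmat j s * Bmat t)))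

/-- `c_{dij} = tr Ĉ_{dij} = n ∑_s p_s c_{sij}`. -/
def cD {p t : ℕ} (n : ℕ) (S : Matrix (Fin p) (Fin p) ℝ) (w : TrtSeq p t → ℝ)
    (i j : Fin 2) : ℝ :=
  (ChatD n S w i j).trace

/-- Fisher information matrix `C_{d,τ0,λ0}` for the direct treatment effects under the
proportional model. -/
def CInfo {p t : ℕ} (n : ℕ) (S : Matrix (Fin p) (Fin p) ℝ) (w : TrtSeq p t → ℝ)
    (τ0 : Fin t → ℝ) (l0 : ℝ) : Matrix (Fin t) (Fin t) ℝ :=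
  CD n S w 0 0 + l0 • (CD n S w 0 1 + CD n S w 1 0) + (l0 ^ 2) • CD n S w 1 1 -
    (τ0 ⬝ᵥ (CD n S w 1 1 *ᵥ τ0))⁻¹ •
      ((CD n S w 0 1 + l0 • CD n S w 1 1) * vecMulVec τ0 τ0 *
        (CD n S w 1 0 + l0 • CD n S w 1 1))

/-- Permutation matrix `S_σ` with `(S_σ)_{j,i} = 1` iff `i = σ j`. -/
def Smat {t : ℕ} (σ : Equiv.Perm (Fin t)) : Matrix (Fin t) (Fin t) ℝ :=
  Matrix.of fun j i => if i = σ j then 1 else 0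

/-- The relabelled sequence `σ ∘ s`. -/
def permSeq {p t : ℕ} (σ : Equiv.Perm (Fin t)) (s : TrtSeq p t) : TrtSeq p t := fun k => σ (s k)

/-- The design `σ d`, with weights `(σd)_s = p_{σ⁻¹ ∘ s}`. -/
def permDesign {p t : ℕ} (σ : Equiv.Perm (Fin t)) (w : TrtSeq p t → ℝ) : TrtSeq p t → ℝ :=
  fun s => w (permSeq σ⁻¹ s)

/-- A design is symmetric if its weights are invariant under treatment relabelling. -/
def IsSymmetricDesign {p t : ℕ} (w : TrtSeq p t → ℝ) : Prop :=
  ∀ (σ : Equiv.Perm (Fin t)) (s : TrtSeq p t), w (permSeq σ s) = w s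

/-- The symmetrized design `d*` with weights `p*_s = (1/t!) ∑_σ p_{σ⁻¹ ∘ s}`. -/
def symmetrize {p t : ℕ} (w : TrtSeq p t → ℝ) : TrtSeq p t → ℝ :=
  fun s => ((Nat.factorial t : ℝ))⁻¹ * ∑ σ : Equiv.Perm (Fin t), permDesign σ w s

/-- `q_s(x) = c_{s11} + 2 c_{s12} x + c_{s22} x²`. -/
def qSeq {p t : ℕ} (S : Matrix (Fin p) (Fin p) ℝ) (s : TrtSeq p t) (x : ℝ) : ℝ :=
  cseq S s 0 0 + 2 * cseq S s 0 1 * x + cseq S s 1 1 * x ^ 2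

/-- `q(x) = max_{s ∈ S} q_s(x)`. -/
def qMax (p t : ℕ) (S : Matrix (Fin p) (Fin p) ℝ) (x : ℝ) : ℝ :=
  sSup (Set.range fun s : TrtSeq p t => qSeq S s x)

/-- `y* = inf_x q(x)`. -/
def yStar (p t : ℕ) (S : Matrix (Fin p) (Fin p) ℝ) : ℝ := ⨅ x : ℝ, qMax p t S x

/-- `q_d(x) = ∑_s p_s q_s(x)`. -/
def qD {p t : ℕ} (S : Matrix (Fin p) (Fin p) ℝ) (w : TrtSeq p t → ℝ) (x : ℝ) : ℝ :=
  ∑ s : TrtSeq p t, w s * qSeq S s x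

/-- `x_d = -c_{d12}/c_{d22}`. -/
def xD {p t : ℕ} (n : ℕ) (S : Matrix (Fin p) (Fin p) ℝ) (w : TrtSeq p t → ℝ) : ℝ :=
  -(cD n S w 0 1) / cD n S w 1 1

/-- An exchangeable prior: a probability measure on `{τ : 1'τ = 0, τ ≠ 0}` that is
invariant under all coordinate permutations of `ℝ^t`. -/
def IsExchangeablePrior {t : ℕ} (g : Measure (Fin t → ℝ)) : Prop :=
  IsProbabilityMeasure g ∧
    g {τ : Fin t → ℝ | ¬((∑ i, τ i) = 0 ∧ τ ≠ 0)} = 0 ∧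
    ∀ σ : Equiv.Perm (Fin t), Measure.map (fun τ i => τ (σ i)) g = g

/-- `m_d(τ0) = min {ℓ' C_{d,τ0,λ0} ℓ : 1'ℓ = 0, ℓ'ℓ = 1}`. -/
def mD {p t : ℕ} (n : ℕ) (S : Matrix (Fin p) (Fin p) ℝ) (w : TrtSeq p t → ℝ) (l0 : ℝ)
    (τ0 : Fin t → ℝ) : ℝ :=
  sInf {v : ℝ | ∃ l : Fin t → ℝ, (∑ i, l i) = 0 ∧ l ⬝ᵥ l = 1 ∧
    v = l ⬝ᵥ (CInfo n S w τ0 l0 *ᵥ l)}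

/-- The E-criterion value `E_{g,λ0}(d) = ∫ m_d(τ0) g(dτ0)`. -/
def Ecrit {p t : ℕ} (n : ℕ) (S : Matrix (Fin p) (Fin p) ℝ) (g : Measure (Fin t → ℝ))
    (l0 : ℝ) (w : TrtSeq p t → ℝ) : ℝ :=
  ∫ τ0, mD n S w l0 τ0 ∂g

/-- Competing designs for E-optimality: designs with a.e. positive `τ0' C_{d22} τ0`
and `g`-integrable `m_d`. -/
def EAdmissible {p t : ℕ} (n : ℕ) (S : Matrix (Fin p) (Fin p) ℝ) (g : Measure (Fin t → ℝ))
    (l0 : ℝ) (w : TrtSeq p t → ℝ) : Prop :=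
  IsDesign w ∧ (∀ᵐ τ0 ∂g, 0 < τ0 ⬝ᵥ (CD n S w 1 1 *ᵥ τ0)) ∧
    Integrable (mD n S w l0) g

/-- `d` is `E_{g,λ0}`-optimal. -/
def EOptimal {p t : ℕ} (n : ℕ) (S : Matrix (Fin p) (Fin p) ℝ) (g : Measure (Fin t → ℝ))
    (l0 : ℝ) (w : TrtSeq p t → ℝ) : Prop :=
  ∀ w' : TrtSeq p t → ℝ, EAdmissible n S g l0 w' → Ecrit n S g l0 w' ≤ Ecrit n S g l0 w

/-- A pseudo symmetric design: treatments equireplicated in each period,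
and all `C_{dij}` completely symmetric. -/
def IsPseudoSymmetric {p t : ℕ} (n : ℕ) (S : Matrix (Fin p) (Fin p) ℝ)
    (w : TrtSeq p t → ℝ) : Prop :=
  (∀ (k : Fin p) (i : Fin t),
    (∑ s ∈ Finset.univ.filter fun s : TrtSeq p t => s k = i, w s) = 1 / (t : ℝ)) ∧
  ∀ i j : Fin 2, ∃ a b : ℝ, CD n S w i j = a • (1 : Matrix (Fin t) (Fin t) ℝ) + b • Jmat t

/-- Eigenvalues of a (Hermitian) matrix sorted increasingly with multiplicity. -/
def sortedEigs {t : ℕ} (C : Matrix (Fin t) (Fin t) ℝ) : Fin t → ℝ :=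
  if h : C.IsHermitian then (fun i => h.eigenvalues (Tuple.sort h.eigenvalues i))
  else fun _ => 0

/-- `Φ_D(C) = (∏_{i=1}^{t-1} a_i)^{1/(t-1)}` (eigenvalues sorted increasingly). -/
def PhiD {t : ℕ} (C : Matrix (Fin t) (Fin t) ℝ) : ℝ :=
  (∏ i ∈ Finset.univ.filter fun i : Fin t => (i : ℕ) ≠ 0, sortedEigs C i) ^ (((t : ℝ) - 1)⁻¹)

/-- `Φ_A(C) = (t-1)(∑_{i=1}^{t-1} a_i⁻¹)⁻¹` if `a_1 > 0`, else `0`. -/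
def PhiA {t : ℕ} (C : Matrix (Fin t) (Fin t) ℝ) : ℝ :=
  if ∀ i : Fin t, (i : ℕ) ≠ 0 → 0 < sortedEigs C i then
    ((t : ℝ) - 1) *
      (∑ i ∈ Finset.univ.filter fun i : Fin t => (i : ℕ) ≠ 0, (sortedEigs C i)⁻¹)⁻¹
  else 0

/-- `Φ_T(C) = tr(C)/(t-1)`. -/
def PhiT {t : ℕ} (C : Matrix (Fin t) (Fin t) ℝ) : ℝ := C.trace / ((t : ℝ) - 1)

/-- The criterion value `∫ Φ(C_{d,τ0,λ0}) g(dτ0)`. -/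
def PhiCrit {p t : ℕ} (n : ℕ) (S : Matrix (Fin p) (Fin p) ℝ)
    (Phi : Matrix (Fin t) (Fin t) ℝ → ℝ) (g : Measure (Fin t → ℝ)) (l0 : ℝ)
    (w : TrtSeq p t → ℝ) : ℝ :=
  ∫ τ0, Phi (CInfo n S w τ0 l0) ∂g

/-- Competing designs for a `Φ`-criterion. -/
def PhiAdmissible {p t : ℕ} (n : ℕ) (S : Matrix (Fin p) (Fin p) ℝ)
    (Phi : Matrix (Fin t) (Fin t) ℝ → ℝ) (g : Measure (Fin t → ℝ)) (l0 : ℝ)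
    (w : TrtSeq p t → ℝ) : Prop :=
  IsDesign w ∧ (∀ᵐ τ0 ∂g, 0 < τ0 ⬝ᵥ (CD n S w 1 1 *ᵥ τ0)) ∧
    Integrable (fun τ0 => Phi (CInfo n S w τ0 l0)) g

/-- `d` is `Φ_{g,λ0}`-optimal. -/
def PhiOptimal {p t : ℕ} (n : ℕ) (S : Matrix (Fin p) (Fin p) ℝ)
    (Phi : Matrix (Fin t) (Fin t) ℝ → ℝ) (g : Measure (Fin t → ℝ)) (l0 : ℝ)
    (w : TrtSeq p t → ℝ) : Prop :=
  ∀ w' : TrtSeq p t → ℝ, PhiAdmissible n S Phi g l0 w' →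
    PhiCrit n S Phi g l0 w' ≤ PhiCrit n S Phi g l0 w

/-- `H_1(s) = F_s`, `H_2(s) = T_s + λ0 F_s` (for estimating `λ`). -/
def Hmat {p t : ℕ} (l0 : ℝ) (i : Fin 2) (s : TrtSeq p t) : Matrix (Fin p) (Fin t) ℝ :=
  if i = 0 then Fmat s else Tmat s + l0 • Fmat s

/-- `Â_{sij} = B_t H_i(s)' B̃ H_j(s) B_t`. -/
def Ahat {p t : ℕ} (S : Matrix (Fin p) (Fin p) ℝ) (l0 : ℝ) (s : TrtSeq p t) (i j : Fin 2) :
    Matrix (Fin t) (Fin t) ℝ :=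
  Bmat t * (Hmat l0 i s)ᵀ * Btil S * Hmat l0 j s * Bmat t

/-- `h_{sij} = tr Â_{sij}`. -/
def hseq {p t : ℕ} (S : Matrix (Fin p) (Fin p) ℝ) (l0 : ℝ) (s : TrtSeq p t) (i j : Fin 2) : ℝ :=
  (Ahat S l0 s i j).trace

/-- `Â_{dij} = n ∑_s p_s Â_{sij}`. -/
def AhatD {p t : ℕ} (n : ℕ) (S : Matrix (Fin p) (Fin p) ℝ) (l0 : ℝ) (w : TrtSeq p t → ℝ)
    (i j : Fin 2) : Matrix (Fin t) (Fin t) ℝ :=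
  (n : ℝ) • ∑ s : TrtSeq p t, w s • Ahat S l0 s i j

/-- `A_{dij} = Â_{dij} - n (∑_s p_s H_i(s) B_t)' B̃ (∑_s p_s H_j(s) B_t)`. -/
def AD {p t : ℕ} (n : ℕ) (S : Matrix (Fin p) (Fin p) ℝ) (l0 : ℝ) (w : TrtSeq p t → ℝ)
    (i j : Fin 2) : Matrix (Fin t) (Fin t) ℝ :=
  AhatD n S l0 w i j -
    (n : ℝ) • ((∑ s : TrtSeq p t, w s • (Hmat l0 i s * Bmat t))ᵀ * Btil S *
      (∑ s : TrtSeq p t, w s • (Hmat l0 j s * Bmat t)))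

/-- `G` is a generalized inverse of `A`. -/
def IsGInv {t : ℕ} (A G : Matrix (Fin t) (Fin t) ℝ) : Prop := A * G * A = A

/-- `A_d(G) = A_{d11} - A_{d12} G A_{d21}` with `A_{d21} = A_{d12}'`. -/
def ADfun {p t : ℕ} (n : ℕ) (S : Matrix (Fin p) (Fin p) ℝ) (l0 : ℝ) (w : TrtSeq p t → ℝ)
    (G : Matrix (Fin t) (Fin t) ℝ) : Matrix (Fin t) (Fin t) ℝ :=
  AD n S l0 w 0 0 - AD n S l0 w 0 1 * G * (AD n S l0 w 0 1)ᵀ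

/-- `r_s(x) = h_{s11} + 2 h_{s12} x + h_{s22} x²`. -/
def rSeq {p t : ℕ} (S : Matrix (Fin p) (Fin p) ℝ) (l0 : ℝ) (s : TrtSeq p t) (x : ℝ) : ℝ :=
  hseq S l0 s 0 0 + 2 * hseq S l0 s 0 1 * x + hseq S l0 s 1 1 * x ^ 2

/-- `r(x) = max_s r_s(x)`. -/
def rMax (p t : ℕ) (S : Matrix (Fin p) (Fin p) ℝ) (l0 : ℝ) (x : ℝ) : ℝ :=
  sSup (Set.range fun s : TrtSeq p t => rSeq S l0 s x)

/-- `y_0 = inf_x r(x)`. -/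
def yZero (p t : ℕ) (S : Matrix (Fin p) (Fin p) ℝ) (l0 : ℝ) : ℝ := ⨅ x : ℝ, rMax p t S l0 x

/-- Real positive semidefinite matrices, in elementary form. -/
def PSDR {m : ℕ} (M : Matrix (Fin m) (Fin m) ℝ) : Prop :=
  Mᵀ = M ∧ ∀ v : Fin m → ℝ, 0 ≤ v ⬝ᵥ (M *ᵥ v)

lemma dot_symm {m : ℕ} (M : Matrix (Fin m) (Fin m) ℝ) (u v : Fin m → ℝ) :
    u ⬝ᵥ (M *ᵥ v) = v ⬝ᵥ (Mᵀ *ᵥ u) := by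
  rw [Matrix.dotProduct_mulVec, Matrix.mulVec_transpose, dotProduct_comm]

lemma PSDR.cs {m : ℕ} {M : Matrix (Fin m) (Fin m) ℝ} (h : PSDR M) (u v : Fin m → ℝ) :
    (u ⬝ᵥ (M *ᵥ v)) ^ 2 ≤ (u ⬝ᵥ (M *ᵥ u)) * (v ⬝ᵥ (M *ᵥ v)) := by
  have key : ∀ x : ℝ, 0 ≤ (v ⬝ᵥ (M *ᵥ v)) * (x * x) + (2 * (u ⬝ᵥ (M *ᵥ v))) * x
      + u ⬝ᵥ (M *ᵥ u) := by
    intro x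
    have h0 := h.2 (u + x • v)
    have hs : v ⬝ᵥ (M *ᵥ u) = u ⬝ᵥ (M *ᵥ v) := by
      rw [dot_symm, h.1]
    simp only [Matrix.mulVec_add, Matrix.mulVec_smul, dotProduct_add, add_dotProduct,
      smul_dotProduct, dotProduct_smul, smul_eq_mul, hs] at h0
    linarith
  have := discrim_le_zero key
  unfold discrim at this
  nlinarith

lemma Btil_psd {p : ℕ} (hp : 2 ≤ p) (S : Matrix (Fin p) (Fin p) ℝ) (hS : S.PosDef) :
    PSDR (Btil S) := by
  have hI := hS.inv
  have hsym : (S⁻¹)ᵀ = S⁻¹ := by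
    have := hI.isHermitian
    simpa [Matrix.IsHermitian] using this
  have hIp : PSDR (S⁻¹) := ⟨hsym, fun v => by
    have := hI.posSemidef.dotProduct_mulVec_nonneg v
    simpa using this⟩
  have hJ : Jmat p = vecMulVec (fun _ => (1:ℝ)) (fun _ => (1:ℝ)) := by
    ext i j; simp [Jmat, vecMulVec]
  have hJt : (Jmat p)ᵀ = Jmat p := by ext i j; simp [Jmat]
  refine ⟨?_, fun v => ?_⟩
  · simp [Btil, Matrix.transpose_sub, Matrix.transpose_smul, Matrix.transpose_mul, hJt, hsym,
      Matrix.mul_assoc]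
  · have hone : (fun _ => (1:ℝ) : Fin p → ℝ) ≠ 0 := by
      intro h
      have := congrFun h ⟨0, by omega⟩
      simp at this
    have hpos : 0 < (fun _ => (1:ℝ) : Fin p → ℝ) ⬝ᵥ (S⁻¹ *ᵥ fun _ => (1 : ℝ)) := by
      have := hI.dotProduct_mulVec_pos hone
      simpa using this
    have hcs := hIp.cs v (fun _ => 1)
    have hs : (fun _ => (1:ℝ) : Fin p → ℝ) ⬝ᵥ (S⁻¹ *ᵥ v) = v ⬝ᵥ (S⁻¹ *ᵥ (fun _ => (1:ℝ))) := by
      rw [dot_symm, hsym]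
    have e : v ⬝ᵥ (Btil S *ᵥ v) = v ⬝ᵥ (S⁻¹ *ᵥ v) -
        ((fun _ => (1:ℝ) : Fin p → ℝ) ⬝ᵥ (S⁻¹ *ᵥ fun _ => (1 : ℝ)))⁻¹ *
          (v ⬝ᵥ (S⁻¹ *ᵥ (fun _ => (1:ℝ)))) ^ 2 := by
      rw [Btil, Matrix.sub_mulVec, Matrix.smul_mulVec, ← Matrix.mulVec_mulVec,
        ← Matrix.mulVec_mulVec, hJ, Matrix.vecMulVec_mulVec, hs]
      simp only [dotProduct_sub, dotProduct_smul, Matrix.mulVec_smul, smul_eq_mul,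
        op_smul_eq_smul]
      ring
    rw [e]
    have : ((fun _ => (1:ℝ) : Fin p → ℝ) ⬝ᵥ (S⁻¹ *ᵥ fun _ => (1 : ℝ)))⁻¹ *
          (v ⬝ᵥ (S⁻¹ *ᵥ (fun _ => (1:ℝ)))) ^ 2 ≤ v ⬝ᵥ (S⁻¹ *ᵥ v) := by
      rw [inv_mul_le_iff₀ hpos]
      linarith
    linarith

lemma Bmat_transpose (t : ℕ) : (Bmat t)ᵀ = Bmat t := by
  ext i j
  simp [Bmat, Jmat, Matrix.one_apply, eq_comm]

lemma Bmat_mulVec {t : ℕ} (v : Fin t → ℝ) (hv : ∑ i, v i = 0) : Bmat t *ᵥ v = v := by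
  have : Jmat t *ᵥ v = 0 := by
    ext i
    simp [Jmat, Matrix.mulVec, dotProduct, hv]
  rw [Bmat, Matrix.sub_mulVec, Matrix.smul_mulVec, this]
  simp

lemma Bmat_sq {t : ℕ} (ht : 3 ≤ t) : Bmat t * Bmat t = Bmat t := by
  have ht0 : (t : ℝ) ≠ 0 := by positivity
  have hJ : Jmat t * Jmat t = (t : ℝ) • Jmat t := by
    ext i j
    simp [Jmat, Matrix.mul_apply]
  rw [Bmat, Matrix.sub_mul, Matrix.mul_sub, Matrix.mul_sub]
  simp only [Matrix.smul_mul, Matrix.mul_smul, hJ, smul_smul, Matrix.one_mul, Matrix.mul_one]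
  rw [inv_mul_cancel₀ ht0, mul_one]
  simp

lemma Chat_eq {p t : ℕ} (S : Matrix (Fin p) (Fin p) ℝ) (s : TrtSeq p t) (i j : Fin 2) :
    Chat S s i j = (Gmat i s * Bmat t)ᵀ * Btil S * (Gmat j s * Bmat t) := by
  simp only [Chat, Matrix.transpose_mul, Bmat_transpose, Matrix.mul_assoc]

lemma Chat_transpose {p t : ℕ} (S : Matrix (Fin p) (Fin p) ℝ) (hB : PSDR (Btil S))
    (s : TrtSeq p t) (i j : Fin 2) : (Chat S s i j)ᵀ = Chat S s j i := by
  rw [Chat_eq, Chat_eq]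
  simp only [Matrix.transpose_mul, Matrix.transpose_transpose, hB.1, Matrix.mul_assoc]

lemma CD_transpose {p t : ℕ} (n : ℕ) (S : Matrix (Fin p) (Fin p) ℝ) (hB : PSDR (Btil S))
    (w : TrtSeq p t → ℝ) (i j : Fin 2) : (CD n S w i j)ᵀ = CD n S w j i := by
  simp only [CD, ChatD, Matrix.transpose_sub, Matrix.transpose_smul, Matrix.transpose_sum,
    Chat_transpose S hB]
  congr 2
  simp only [Matrix.transpose_mul, Matrix.transpose_transpose, hB.1, Matrix.mul_assoc,
    Matrix.transpose_sum, Matrix.transpose_smul]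

lemma quad_tmul {p t : ℕ} (X Y : Matrix (Fin p) (Fin t) ℝ) (M : Matrix (Fin p) (Fin p) ℝ)
    (l m : Fin t → ℝ) : l ⬝ᵥ ((Xᵀ * M * Y) *ᵥ m) = (X *ᵥ l) ⬝ᵥ (M *ᵥ (Y *ᵥ m)) := by
  rw [← Matrix.mulVec_mulVec, ← Matrix.mulVec_mulVec, Matrix.dotProduct_mulVec,
    Matrix.vecMul_transpose]

lemma CD11_psd {p t : ℕ} (n : ℕ) (S : Matrix (Fin p) (Fin p) ℝ) (hB : PSDR (Btil S))
    (w : TrtSeq p t → ℝ) (hw : IsDesign w) : PSDR (CD n S w 1 1) := by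
  refine ⟨CD_transpose n S hB w 1 1, fun v => ?_⟩
  set X : TrtSeq p t → Fin p → ℝ := fun s => (Gmat 1 s * Bmat t) *ᵥ v with hX
  set Y : Fin p → ℝ := ∑ s, w s • X s with hY
  have e : v ⬝ᵥ (CD n S w 1 1 *ᵥ v) =
      (n : ℝ) * (∑ s, w s * (X s ⬝ᵥ (Btil S *ᵥ X s)) - Y ⬝ᵥ (Btil S *ᵥ Y)) := by
    have hYe : (∑ s : TrtSeq p t, w s • (Gmat 1 s * Bmat t)) *ᵥ v = Y := by
      rw [hY, Matrix.sum_mulVec]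
      simp only [Matrix.smul_mulVec, hX]
    rw [CD, ChatD, Matrix.sub_mulVec, Matrix.smul_mulVec, Matrix.smul_mulVec, dotProduct_sub,
      dotProduct_smul, dotProduct_smul, quad_tmul, hYe, Matrix.sum_mulVec, dotProduct_sum]
    simp only [Matrix.smul_mulVec, dotProduct_smul, Chat_eq, quad_tmul, smul_eq_mul]
    rw [mul_sub]
  have h0 : 0 ≤ ∑ s, w s * ((X s - Y) ⬝ᵥ (Btil S *ᵥ (X s - Y))) :=
    Finset.sum_nonneg fun s _ => mul_nonneg (hw.1 s) (hB.2 _)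
  have e2 : ∑ s, w s * ((X s - Y) ⬝ᵥ (Btil S *ᵥ (X s - Y))) =
      ∑ s, w s * (X s ⬝ᵥ (Btil S *ᵥ X s)) - Y ⬝ᵥ (Btil S *ᵥ Y) := by
    have e3 : ∀ s, w s * ((X s - Y) ⬝ᵥ (Btil S *ᵥ (X s - Y))) =
        w s * (X s ⬝ᵥ (Btil S *ᵥ X s)) - 2 * (w s * (X s ⬝ᵥ (Btil S *ᵥ Y)))
          + w s * (Y ⬝ᵥ (Btil S *ᵥ Y)) := by
      intro s
      have hs : Y ⬝ᵥ (Btil S *ᵥ X s) = X s ⬝ᵥ (Btil S *ᵥ Y) := by rw [dot_symm, hB.1]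
      simp only [Matrix.mulVec_sub, dotProduct_sub, sub_dotProduct, hs]
      ring
    have e4 : ∑ s, w s * (X s ⬝ᵥ (Btil S *ᵥ Y)) = Y ⬝ᵥ (Btil S *ᵥ Y) := by
      conv_rhs => rw [hY, sum_dotProduct]
      simp only [smul_dotProduct, smul_eq_mul, ← hY]
    simp only [e3, Finset.sum_add_distrib, Finset.sum_sub_distrib, ← Finset.mul_sum,
      ← Finset.sum_mul, hw.2, e4]
    ring
  rw [e, ← e2]
  positivity

/-- Dropping the period correction increases the quadratic form. -/
lemma quad_CD_le {p t : ℕ} (n : ℕ) (S : Matrix (Fin p) (Fin p) ℝ) (hB : PSDR (Btil S))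
    (w : TrtSeq p t → ℝ) (x : ℝ) (v : Fin t → ℝ) :
    v ⬝ᵥ (CD n S w 0 0 *ᵥ v) + 2 * x * (v ⬝ᵥ (CD n S w 0 1 *ᵥ v)) +
      x ^ 2 * (v ⬝ᵥ (CD n S w 1 1 *ᵥ v)) ≤
    v ⬝ᵥ (ChatD n S w 0 0 *ᵥ v) + 2 * x * (v ⬝ᵥ (ChatD n S w 0 1 *ᵥ v)) +
      x ^ 2 * (v ⬝ᵥ (ChatD n S w 1 1 *ᵥ v)) := by
  set X : Fin 2 → Fin p → ℝ := fun i => (∑ s : TrtSeq p t, w s • (Gmat i s * Bmat t)) *ᵥ v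
    with hX
  have e : ∀ i j, v ⬝ᵥ (CD n S w i j *ᵥ v) = v ⬝ᵥ (ChatD n S w i j *ᵥ v) -
      n * (X i ⬝ᵥ (Btil S *ᵥ X j)) := by
    intro i j
    rw [CD, Matrix.sub_mulVec, Matrix.smul_mulVec, dotProduct_sub, dotProduct_smul, quad_tmul,
      smul_eq_mul]
  have h0 := hB.2 (X 0 + x • X 1)
  have hs : X 1 ⬝ᵥ (Btil S *ᵥ X 0) = X 0 ⬝ᵥ (Btil S *ᵥ X 1) := by rw [dot_symm, hB.1]
  simp only [Matrix.mulVec_add, Matrix.mulVec_smul, dotProduct_add, add_dotProduct,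
      smul_dotProduct, dotProduct_smul, smul_eq_mul, hs] at h0
  rw [e, e, e]
  have := mul_nonneg (Nat.cast_nonneg (α := ℝ) n) h0
  linarith

lemma quad_CInfo {p t : ℕ} (n : ℕ) (S : Matrix (Fin p) (Fin p) ℝ) (hB : PSDR (Btil S))
    (w : TrtSeq p t → ℝ) (τ l : Fin t → ℝ) (l0 : ℝ) :
    l ⬝ᵥ (CInfo n S w τ l0 *ᵥ l) =
      l ⬝ᵥ (CD n S w 0 0 *ᵥ l) + 2 * l0 * (l ⬝ᵥ (CD n S w 0 1 *ᵥ l)) +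
        l0 ^ 2 * (l ⬝ᵥ (CD n S w 1 1 *ᵥ l)) -
      (τ ⬝ᵥ (CD n S w 1 1 *ᵥ τ))⁻¹ *
        (l ⬝ᵥ (CD n S w 0 1 *ᵥ τ) + l0 * (l ⬝ᵥ (CD n S w 1 1 *ᵥ τ))) ^ 2 := by
  have a1 : ∀ u v, u ⬝ᵥ (CD n S w 1 0 *ᵥ v) = v ⬝ᵥ (CD n S w 0 1 *ᵥ u) := by
    intro u v; rw [dot_symm, CD_transpose n S hB]
  have a2 : τ ⬝ᵥ (CD n S w 1 1 *ᵥ l) = l ⬝ᵥ (CD n S w 1 1 *ᵥ τ) := by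
    rw [dot_symm, CD_transpose n S hB]
  rw [CInfo, Matrix.sub_mulVec, Matrix.add_mulVec, Matrix.add_mulVec, Matrix.smul_mulVec,
    Matrix.smul_mulVec, Matrix.smul_mulVec, Matrix.add_mulVec, ← Matrix.mulVec_mulVec,
    ← Matrix.mulVec_mulVec, Matrix.vecMulVec_mulVec]
  simp only [Matrix.mulVec_add, Matrix.add_mulVec, Matrix.mulVec_smul, Matrix.smul_mulVec,
    dotProduct_add, dotProduct_sub, dotProduct_smul, smul_eq_mul, op_smul_eq_smul, a1, a2]
  ring

/-- Bounded below. -/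
lemma quad_bdd {t : ℕ} (C : Matrix (Fin t) (Fin t) ℝ) (l : Fin t → ℝ) (hl : l ⬝ᵥ l = 1) :
    |l ⬝ᵥ (C *ᵥ l)| ≤ ∑ i, ∑ j, |C i j| := by
  have h1 : ∀ i, |l i| ≤ 1 := by
    intro i
    have : l i * l i ≤ 1 := by
      rw [← hl, dotProduct]
      exact Finset.single_le_sum (f := fun i => l i * l i) (fun i _ => mul_self_nonneg _)
        (Finset.mem_univ i)
    exact abs_le_one_iff_mul_self_le_one.2 this
  have : l ⬝ᵥ (C *ᵥ l) = ∑ i, ∑ j, l i * (C i j * l j) := by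
    simp only [dotProduct, Matrix.mulVec, Finset.mul_sum]
  rw [this]
  refine (Finset.abs_sum_le_sum_abs _ _).trans (Finset.sum_le_sum fun i _ => ?_)
  refine (Finset.abs_sum_le_sum_abs _ _).trans (Finset.sum_le_sum fun j _ => ?_)
  rw [abs_mul, abs_mul]
  calc |l i| * (|C i j| * |l j|) ≤ 1 * (|C i j| * 1) := by
        gcongr
        · exact h1 i
        · exact h1 j
    _ = _ := by ring

lemma dot_self_pos {t : ℕ} (τ : Fin t → ℝ) (h : τ ≠ 0) : 0 < τ ⬝ᵥ τ := by
  obtain ⟨i, hi⟩ := Function.ne_iff.1 h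
  rw [dotProduct]
  exact Finset.sum_pos' (fun i _ => mul_self_nonneg _)
    ⟨i, Finset.mem_univ i, mul_self_pos.2 hi⟩

/-- the normalised vector -/
lemma exists_unit {t : ℕ} (τ : Fin t → ℝ) (h0 : ∑ i, τ i = 0) (h : τ ≠ 0) :
    ∃ c : ℝ, c ^ 2 = (τ ⬝ᵥ τ)⁻¹ ∧ (∑ i, (c • τ) i) = 0 ∧ (c • τ) ⬝ᵥ (c • τ) = 1 ∧
      ∀ C : Matrix (Fin t) (Fin t) ℝ,
        (c • τ) ⬝ᵥ (C *ᵥ (c • τ)) = (τ ⬝ᵥ τ)⁻¹ * (τ ⬝ᵥ (C *ᵥ τ)) := by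
  have hp := dot_self_pos τ h
  have hc : (Real.sqrt (τ ⬝ᵥ τ)⁻¹) ^ 2 = (τ ⬝ᵥ τ)⁻¹ := Real.sq_sqrt (by positivity)
  refine ⟨Real.sqrt (τ ⬝ᵥ τ)⁻¹, hc, ?_, ?_, fun C => ?_⟩
  · simp [← Finset.mul_sum, h0]
  · simp only [smul_dotProduct, dotProduct_smul, smul_eq_mul]
    rw [← mul_assoc, ← sq, hc, inv_mul_cancel₀ hp.ne']
  · simp only [smul_dotProduct, dotProduct_smul, smul_eq_mul, Matrix.mulVec_smul]
    rw [← mul_assoc, ← sq, hc]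

lemma scalar_bound (a b d x l0 : ℝ) (hd : 0 < d) :
    a + 2 * l0 * b + l0 ^ 2 * d - d⁻¹ * (b + l0 * d) ^ 2 ≤ a + 2 * x * b + x ^ 2 * d := by
  have : a + 2 * x * b + x ^ 2 * d - (a + 2 * l0 * b + l0 ^ 2 * d - d⁻¹ * (b + l0 * d) ^ 2)
      = d⁻¹ * (b + x * d) ^ 2 := by
    field_simp
    ring
  have h4 : 0 ≤ d⁻¹ * (b + x * d) ^ 2 := by positivity
  linarith

/-- Upper bound for a competing design. -/
lemma mD_le {p t : ℕ} (n : ℕ) (S : Matrix (Fin p) (Fin p) ℝ) (hB : PSDR (Btil S))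
    (w : TrtSeq p t → ℝ) (l0 x : ℝ) (τ : Fin t → ℝ)
    (h0 : ∑ i, τ i = 0) (h : τ ≠ 0) (hpos : 0 < τ ⬝ᵥ (CD n S w 1 1 *ᵥ τ)) :
    mD n S w l0 τ ≤ (τ ⬝ᵥ τ)⁻¹ * (τ ⬝ᵥ ((ChatD n S w 0 0 + (2 * x) • ChatD n S w 0 1 +
      (x ^ 2) • ChatD n S w 1 1) *ᵥ τ)) := by
  obtain ⟨c, -, hc1, hc2, hc3⟩ := exists_unit τ h0 h
  have hp := dot_self_pos τ h
  have hle : mD n S w l0 τ ≤ (τ ⬝ᵥ τ)⁻¹ * (τ ⬝ᵥ (CInfo n S w τ l0 *ᵥ τ)) := by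
    refine csInf_le ⟨-∑ i, ∑ j, |CInfo n S w τ l0 i j|, ?_⟩ ⟨c • τ, hc1, hc2, (hc3 _).symm⟩
    rintro v ⟨l, -, hl, rfl⟩
    exact (abs_le.1 (quad_bdd _ l hl)).1
  refine hle.trans ?_
  refine mul_le_mul_of_nonneg_left ?_ (by positivity)
  have h3 := quad_CD_le n S hB w x τ
  simp only [Matrix.add_mulVec, Matrix.smul_mulVec, dotProduct_add, dotProduct_smul, smul_eq_mul]
  refine le_trans ?_ h3
  rw [quad_CInfo n S hB]
  exact scalar_bound _ _ _ x l0 hpos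

/-- Value at a Kushner design. -/
lemma mD_eq {p t : ℕ} (n : ℕ) (S : Matrix (Fin p) (Fin p) ℝ) (hB : PSDR (Btil S))
    (w : TrtSeq p t → ℝ) (hw : IsDesign w) (l0 x y : ℝ)
    (k1 : CD n S w 0 0 + x • CD n S w 0 1 = y • Bmat t)
    (k2 : CD n S w 1 0 + x • CD n S w 1 1 = 0) (τ : Fin t → ℝ)
    (h0 : ∑ i, τ i = 0) (h : τ ≠ 0) : mD n S w l0 τ = y := by
  have hP := CD11_psd n S hB w hw
  have k3 : CD n S w 0 1 = (-x) • CD n S w 1 1 := by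
    rw [← CD_transpose n S hB w 1 0, eq_neg_of_add_eq_zero_left k2, Matrix.transpose_neg,
      Matrix.transpose_smul, hP.1, neg_smul]
  have k4 : CD n S w 0 0 = y • Bmat t + (x ^ 2) • CD n S w 1 1 := by
    rw [eq_sub_of_add_eq k1, k3, smul_smul, sub_eq_add_neg, ← neg_smul]
    congr 2
    ring
  have q : ∀ l : Fin t → ℝ, ∑ i, l i = 0 → l ⬝ᵥ (CInfo n S w τ l0 *ᵥ l) =
      y * (l ⬝ᵥ l) + (l0 - x) ^ 2 * (l ⬝ᵥ (CD n S w 1 1 *ᵥ l) -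
        (τ ⬝ᵥ (CD n S w 1 1 *ᵥ τ))⁻¹ * (l ⬝ᵥ (CD n S w 1 1 *ᵥ τ)) ^ 2) := by
    intro l hl
    rw [quad_CInfo n S hB, k4, k3]
    simp only [Matrix.add_mulVec, Matrix.smul_mulVec, dotProduct_add, dotProduct_smul,
      smul_eq_mul, Bmat_mulVec l hl]
    ring
  have lower : ∀ v ∈ {v : ℝ | ∃ l : Fin t → ℝ, (∑ i, l i) = 0 ∧ l ⬝ᵥ l = 1 ∧
      v = l ⬝ᵥ (CInfo n S w τ l0 *ᵥ l)}, y ≤ v := by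
    rintro v ⟨l, hl, hl1, rfl⟩
    rw [q l hl, hl1]
    have hcs := hP.cs l τ
    have : (τ ⬝ᵥ (CD n S w 1 1 *ᵥ τ))⁻¹ * (l ⬝ᵥ (CD n S w 1 1 *ᵥ τ)) ^ 2 ≤
        l ⬝ᵥ (CD n S w 1 1 *ᵥ l) := by
      rcases (hP.2 τ).eq_or_lt with h | h
      · rw [← h, _root_.inv_zero, zero_mul]
        exact hP.2 l
      · rw [inv_mul_le_iff₀ h]
        linarith
    have := mul_nonneg (sq_nonneg (l0 - x)) (sub_nonneg.2 this)
    linarith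
  obtain ⟨c, -, hc1, hc2, hc3⟩ := exists_unit τ h0 h
  have hp := dot_self_pos τ h
  have hmem : y ∈ {v : ℝ | ∃ l : Fin t → ℝ, (∑ i, l i) = 0 ∧ l ⬝ᵥ l = 1 ∧
      v = l ⬝ᵥ (CInfo n S w τ l0 *ᵥ l)} := by
    refine ⟨c • τ, hc1, hc2, ?_⟩
    rw [hc3, q τ h0]
    have : (τ ⬝ᵥ (CD n S w 1 1 *ᵥ τ))⁻¹ * (τ ⬝ᵥ (CD n S w 1 1 *ᵥ τ)) ^ 2 =
        τ ⬝ᵥ (CD n S w 1 1 *ᵥ τ) := by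
      rcases eq_or_ne (τ ⬝ᵥ (CD n S w 1 1 *ᵥ τ)) 0 with h | h
      · simp [h]
      · field_simp
    rw [this, sub_self, mul_zero, add_zero]
    field_simp
  exact le_antisymm (csInf_le ⟨y, lower⟩ hmem) (le_csInf ⟨y, hmem⟩ lower)

/-- second moments of the normalised prior -/
lemma moment_abs_le {t : ℕ} (τ : Fin t → ℝ) (i j : Fin t) :
    |(τ ⬝ᵥ τ)⁻¹ * (τ i * τ j)| ≤ 1 := by
  have h1 : ∀ i, τ i ^ 2 ≤ τ ⬝ᵥ τ := by
    intro i
    rw [dotProduct, sq]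
    exact Finset.single_le_sum (f := fun i => τ i * τ i) (fun i _ => mul_self_nonneg _)
        (Finset.mem_univ i)
  have hnn : 0 ≤ τ ⬝ᵥ τ := (sq_nonneg _).trans (h1 i)
  rcases hnn.eq_or_lt with h | h
  · rw [← h]; simp
  · rw [abs_mul, abs_of_pos (inv_pos.2 h), inv_mul_le_iff₀ h, mul_one, abs_le]
    constructor <;> nlinarith [h1 i, h1 j, sq_nonneg (τ i + τ j), sq_nonneg (τ i - τ j)]

lemma moment_measurable {t : ℕ} (i j : Fin t) :
    Measurable fun τ : Fin t → ℝ => (τ ⬝ᵥ τ)⁻¹ * (τ i * τ j) := by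
  simp only [dotProduct]
  fun_prop

lemma moment_integrable {t : ℕ} (g : Measure (Fin t → ℝ)) [IsProbabilityMeasure g]
    (i j : Fin t) : Integrable (fun τ : Fin t → ℝ => (τ ⬝ᵥ τ)⁻¹ * (τ i * τ j)) g :=
  Integrable.of_bound (moment_measurable i j).aestronglyMeasurable 1
    (Filter.Eventually.of_forall fun τ => moment_abs_le τ i j)

lemma prior_ae {t : ℕ} (g : Measure (Fin t → ℝ)) (hg : IsExchangeablePrior g) :
    ∀ᵐ τ ∂g, (∑ i, τ i) = 0 ∧ τ ≠ 0 := hg.2.1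

lemma moment_perm {t : ℕ} (g : Measure (Fin t → ℝ)) (hg : IsExchangeablePrior g)
    (σ : Equiv.Perm (Fin t)) (i j : Fin t) :
    ∫ τ, (τ ⬝ᵥ τ)⁻¹ * (τ (σ i) * τ (σ j)) ∂g = ∫ τ, (τ ⬝ᵥ τ)⁻¹ * (τ i * τ j) ∂g := by
  have hm : Measurable (fun (τ : Fin t → ℝ) (i : Fin t) => τ (σ i)) := by fun_prop
  conv_rhs => rw [← hg.2.2 σ]
  rw [integral_map hm.aemeasurable (moment_measurable i j).aestronglyMeasurable]
  refine integral_congr_ae (Filter.Eventually.of_forall fun τ => ?_)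
  have : (fun i => τ (σ i)) ⬝ᵥ (fun i => τ (σ i)) = τ ⬝ᵥ τ := by
    simp only [dotProduct]
    exact Equiv.sum_comp σ (fun i => τ i * τ i)
  simp only [this]

lemma moment_eq {t : ℕ} (ht : 3 ≤ t) (g : Measure (Fin t → ℝ)) (hg : IsExchangeablePrior g)
    (i j : Fin t) :
    ∫ τ, (τ ⬝ᵥ τ)⁻¹ * (τ i * τ j) ∂g = ((t : ℝ) - 1)⁻¹ * Bmat t i j := by
  have := hg.1
  set M : Fin t → Fin t → ℝ := fun i j => ∫ τ, (τ ⬝ᵥ τ)⁻¹ * (τ i * τ j) ∂g with hM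
  have ht3 : (3 : ℝ) ≤ t := by exact_mod_cast ht
  have ht0 : (t : ℝ) ≠ 0 := by positivity
  have ht1 : (t : ℝ) - 1 ≠ 0 := by linarith
  have hperm : ∀ (σ : Equiv.Perm (Fin t)) i j, M (σ i) (σ j) = M i j :=
    fun σ i j => moment_perm g hg σ i j
  have hdiag : ∀ i j, M j j = M i i := by
    intro i j
    have := hperm (Equiv.swap i j) i i
    simpa using this
  have htr : ∑ i, M i i = 1 := by
    simp only [hM]
    rw [← integral_finsetSum _ (fun i _ => moment_integrable g i i)]
    have : ∫ τ : Fin t → ℝ, (1 : ℝ) ∂g = 1 := by simp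
    rw [← this]
    refine integral_congr_ae ?_
    filter_upwards [prior_ae g hg] with τ hτ
    rw [← Finset.mul_sum]
    exact inv_mul_cancel₀ (dot_self_pos τ hτ.2).ne'
  have hMii : ∀ i, M i i = (t : ℝ)⁻¹ := by
    intro i
    have : ∑ k : Fin t, M k k = t * M i i := by
      rw [Finset.sum_congr rfl (fun k _ => hdiag i k)]
      simp
    rw [htr] at this
    field_simp
    linarith
  have hrow : ∀ i, ∑ j, M i j = 0 := by
    intro i
    simp only [hM]
    rw [← integral_finsetSum _ (fun j _ => moment_integrable g i j)]
    have : ∫ τ : Fin t → ℝ, (0 : ℝ) ∂g = 0 := by simp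
    rw [← this]
    refine integral_congr_ae ?_
    filter_upwards [prior_ae g hg] with τ hτ
    rw [← Finset.mul_sum, ← Finset.mul_sum, hτ.1]
    simp
  change M i j = _
  by_cases hij : i = j
  · subst hij
    rw [hMii]
    simp [Bmat, Jmat]
    field_simp
  · have hoff : ∀ k, k ≠ i → M i k = M i j := by
      intro k hk
      have := hperm (Equiv.swap j k) i j
      rw [Equiv.swap_apply_of_ne_of_ne hij (Ne.symm hk), Equiv.swap_apply_left] at this
      exact this
    have h1 := hrow i
    rw [← Finset.add_sum_erase _ _ (Finset.mem_univ i),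
      Finset.sum_congr rfl (fun k hk => hoff k (Finset.ne_of_mem_erase hk)), hMii] at h1
    rw [Finset.sum_const, Finset.card_erase_of_mem (Finset.mem_univ i), Finset.card_univ,
      Fintype.card_fin, nsmul_eq_mul, Nat.cast_sub (by omega), Nat.cast_one] at h1
    simp [Bmat, Jmat, Matrix.one_apply, hij]
    rw [← mul_right_inj' ht1, mul_neg, mul_inv_cancel_left₀ ht1]
    linarith

lemma quad_expand {t : ℕ} (K : Matrix (Fin t) (Fin t) ℝ) (τ : Fin t → ℝ) :
    (τ ⬝ᵥ τ)⁻¹ * (τ ⬝ᵥ (K *ᵥ τ)) = ∑ i, ∑ j, K i j * ((τ ⬝ᵥ τ)⁻¹ * (τ i * τ j)) := by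
  have : τ ⬝ᵥ (K *ᵥ τ) = ∑ i, ∑ j, τ i * (K i j * τ j) := by
    simp only [dotProduct, Matrix.mulVec, Finset.mul_sum]
  rw [this, Finset.mul_sum]
  refine Finset.sum_congr rfl fun i _ => ?_
  rw [Finset.mul_sum]
  refine Finset.sum_congr rfl fun j _ => ?_
  ring

lemma quad_integrable {t : ℕ} (g : Measure (Fin t → ℝ)) [IsProbabilityMeasure g]
    (K : Matrix (Fin t) (Fin t) ℝ) :
    Integrable (fun τ : Fin t → ℝ => (τ ⬝ᵥ τ)⁻¹ * (τ ⬝ᵥ (K *ᵥ τ))) g := by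
  simp only [quad_expand]
  exact integrable_finsetSum _ fun i _ => integrable_finsetSum _ fun j _ =>
    (moment_integrable g i j).const_mul _

lemma quad_integral {t : ℕ} (ht : 3 ≤ t) (g : Measure (Fin t → ℝ)) (hg : IsExchangeablePrior g)
    (K : Matrix (Fin t) (Fin t) ℝ) (hK : K * Bmat t = K) :
    ∫ τ, (τ ⬝ᵥ τ)⁻¹ * (τ ⬝ᵥ (K *ᵥ τ)) ∂g = ((t : ℝ) - 1)⁻¹ * K.trace := by
  have := hg.1
  simp only [quad_expand]
  rw [integral_finsetSum (f := fun i (τ : Fin t → ℝ) => ∑ j, K i j * ((τ ⬝ᵥ τ)⁻¹ * (τ i * τ j)))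
    Finset.univ fun i _ => integrable_finsetSum Finset.univ fun j _ =>
    (moment_integrable g i j).const_mul (K i j)]
  have : ∀ i, ∫ τ, ∑ j, K i j * ((τ ⬝ᵥ τ)⁻¹ * (τ i * τ j)) ∂g =
      ((t : ℝ) - 1)⁻¹ * (K * Bmat t) i i := by
    intro i
    rw [integral_finsetSum Finset.univ fun j _ => (moment_integrable g i j).const_mul (K i j), Matrix.mul_apply,
      Finset.mul_sum]
    refine Finset.sum_congr rfl fun j _ => ?_
    rw [integral_const_mul, moment_eq ht g hg]
    have : Bmat t j i = Bmat t i j := congrFun (congrFun (Bmat_transpose t) i) j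
    rw [this]
    ring
  simp only [this, hK, Matrix.trace, Finset.mul_sum, Matrix.diag]

lemma ChatD_mul_B {p t : ℕ} (ht : 3 ≤ t) (n : ℕ) (S : Matrix (Fin p) (Fin p) ℝ)
    (w : TrtSeq p t → ℝ) (i j : Fin 2) : ChatD n S w i j * Bmat t = ChatD n S w i j := by
  have : ∀ s : TrtSeq p t, Chat S s i j * Bmat t = Chat S s i j := by
    intro s
    rw [Chat, Matrix.mul_assoc _ (Bmat t) (Bmat t), Bmat_sq ht]
  simp only [ChatD, Matrix.smul_mul, Finset.sum_mul, this]

lemma trace_ChatD {p t : ℕ} (n : ℕ) (S : Matrix (Fin p) (Fin p) ℝ)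
    (w : TrtSeq p t → ℝ) (i j : Fin 2) :
    (ChatD n S w i j).trace = n * ∑ s, w s * cseq S s i j := by
  simp only [ChatD, Matrix.trace_smul, Matrix.trace_sum, smul_eq_mul, cseq]

/-- a design satisfying Kushner's conditions for universal optimality
under the traditional model is `E_{g,λ0}`-optimal for the proportional model. -/
theorem stmt10 (p t n : ℕ) (hp : 2 ≤ p) (ht : 3 ≤ t) (hn : 1 ≤ n)
    (S : Matrix (Fin p) (Fin p) ℝ) (hS : S.PosDef)
    (xstar : ℝ) (hxs : qMax p t S xstar = yStar p t S)
    (hxsu : ∀ x : ℝ, qMax p t S x = yStar p t S → x = xstar)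
    (w : TrtSeq p t → ℝ) (hw : IsDesign w)
    (h1 : ∑ s ∈ Finset.univ.filter (fun s : TrtSeq p t => qSeq S s xstar = yStar p t S),
        w s • (Chat S s 0 0 + xstar • Chat S s 0 1) =
      (yStar p t S / ((t : ℝ) - 1)) • Bmat t)
    (h2 : ∑ s ∈ Finset.univ.filter (fun s : TrtSeq p t => qSeq S s xstar = yStar p t S),
        w s • (Chat S s 1 0 + xstar • Chat S s 1 1) = 0)
    (h3 : ∑ s ∈ Finset.univ.filter (fun s : TrtSeq p t => qSeq S s xstar = yStar p t S),
        w s • (Btil S * (Tmat s + xstar • Fmat s) * Bmat t) = 0)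
    (h4 : ∑ s ∈ Finset.univ.filter (fun s : TrtSeq p t => qSeq S s xstar = yStar p t S),
        w s = 1)
    (h5 : ∀ s : TrtSeq p t, qSeq S s xstar ≠ yStar p t S → w s = 0) :
    ∀ (l0 : ℝ) (g : Measure (Fin t → ℝ)), IsExchangeablePrior g →
      EOptimal n S g l0 w := by
  intro l0 g hg w' hw'
  have := hg.1
  have hB := Btil_psd hp S hS
  have ht3 : (3 : ℝ) ≤ t := by exact_mod_cast ht
  have ht1 : 0 < (t : ℝ) - 1 := by linarith
  -- extend the sums over `Q` to all sequences
  have ext : ∀ f : TrtSeq p t → Matrix (Fin t) (Fin t) ℝ,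
      ∑ s ∈ Finset.univ.filter (fun s : TrtSeq p t => qSeq S s xstar = yStar p t S),
        w s • f s = ∑ s, w s • f s := by
    intro f
    refine Finset.sum_subset (Finset.filter_subset _ _) fun s _ hs => ?_
    rw [h5 s (by simpa using hs), zero_smul]
  have extP : ∀ f : TrtSeq p t → Matrix (Fin p) (Fin t) ℝ,
      ∑ s ∈ Finset.univ.filter (fun s : TrtSeq p t => qSeq S s xstar = yStar p t S),
        w s • f s = ∑ s, w s • f s := by
    intro f
    refine Finset.sum_subset (Finset.filter_subset _ _) fun s _ hs => ?_
    rw [h5 s (by simpa using hs), zero_smul]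
  rw [ext] at h1 h2
  rw [extP] at h3
  -- the period correction vanishes
  have h3' : Btil S * (∑ s : TrtSeq p t, w s • (Gmat 0 s * Bmat t)) +
      xstar • (Btil S * (∑ s : TrtSeq p t, w s • (Gmat 1 s * Bmat t))) = 0 := by
    rw [← h3, Matrix.mul_sum, Matrix.mul_sum, Finset.smul_sum, ← Finset.sum_add_distrib]
    refine Finset.sum_congr rfl fun s _ => ?_
    simp only [Gmat, Matrix.mul_smul, Matrix.mul_add, Matrix.add_mul, Matrix.smul_mul,
      Matrix.mul_assoc, smul_add, smul_comm (w s) xstar]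
    simp
  have corr : ∀ i : Fin 2, CD n S w i 0 + xstar • CD n S w i 1 =
      (n : ℝ) • ∑ s, w s • (Chat S s i 0 + xstar • Chat S s i 1) := by
    intro i
    have e1 : ∑ s, w s • (Chat S s i 0 + xstar • Chat S s i 1) =
        ∑ s, w s • Chat S s i 0 + xstar • ∑ s, w s • Chat S s i 1 := by
      simp only [smul_add, Finset.sum_add_distrib, Finset.smul_sum, smul_comm (w _) xstar]
    set X := (∑ s : TrtSeq p t, w s • (Gmat i s * Bmat t))ᵀ
    have e2 : X * (Btil S * (∑ s : TrtSeq p t, w s • (Gmat 0 s * Bmat t))) +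
      xstar • (X * (Btil S * (∑ s : TrtSeq p t, w s • (Gmat 1 s * Bmat t)))) = 0 := by
      rw [← Matrix.mul_smul, ← Matrix.mul_add, h3', Matrix.mul_zero]
    rw [CD, CD, ChatD, ChatD, e1, Matrix.mul_assoc, Matrix.mul_assoc, 
      eq_neg_of_add_eq_zero_left e2]
    module
  have k1 : CD n S w 0 0 + xstar • CD n S w 0 1 =
      ((n : ℝ) * (yStar p t S / ((t : ℝ) - 1))) • Bmat t := by
    rw [corr, h1, smul_smul]
  have k2 : CD n S w 1 0 + xstar • CD n S w 1 1 = 0 := by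
    rw [corr, h2, smul_zero]
  have val : Ecrit n S g l0 w = (n : ℝ) * (yStar p t S / ((t : ℝ) - 1)) := by
    rw [Ecrit]
    have : ∫ τ : Fin t → ℝ, ((n : ℝ) * (yStar p t S / ((t : ℝ) - 1))) ∂g =
        (n : ℝ) * (yStar p t S / ((t : ℝ) - 1)) := by simp
    rw [← this]
    refine integral_congr_ae ?_
    filter_upwards [prior_ae g hg] with τ hτ
    exact mD_eq n S hB w hw l0 xstar _ k1 k2 τ hτ.1 hτ.2
  set K := ChatD n S w' 0 0 + (2 * xstar) • ChatD n S w' 0 1 +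
      (xstar ^ 2) • ChatD n S w' 1 1 with hK
  have hKB : K * Bmat t = K := by
    simp only [hK, Matrix.add_mul, Matrix.smul_mul, ChatD_mul_B ht]
  have hle : Ecrit n S g l0 w' ≤ ((t : ℝ) - 1)⁻¹ * K.trace := by
    rw [← quad_integral ht g hg K hKB, Ecrit]
    refine integral_mono_ae hw'.2.2 (quad_integrable g K) ?_
    filter_upwards [prior_ae g hg, hw'.2.1] with τ hτ hpos
    exact mD_le n S hB w' l0 xstar τ hτ.1 hτ.2 hpos
  have htr : K.trace = n * ∑ s, w' s * qSeq S s xstar := by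
    simp only [hK, Matrix.trace_add, Matrix.trace_smul, trace_ChatD, smul_eq_mul, qSeq]
    simp only [mul_add, Finset.sum_add_distrib, Finset.mul_sum]
    congr 1
    · congr 1
      refine Finset.sum_congr rfl fun s _ => ?_
      ring
    · refine Finset.sum_congr rfl fun s _ => ?_
      ring
  have hq : ∀ s : TrtSeq p t, qSeq S s xstar ≤ yStar p t S := by
    intro s
    rw [← hxs]
    exact le_csSup (Set.finite_range _).bddAbove ⟨s, rfl⟩
  have hsum : ∑ s, w' s * qSeq S s xstar ≤ yStar p t S := by
    calc ∑ s, w' s * qSeq S s xstar ≤ ∑ s, w' s * yStar p t S :=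
          Finset.sum_le_sum fun s _ => mul_le_mul_of_nonneg_left (hq s) (hw'.1.1 s)
      _ = yStar p t S := by rw [← Finset.sum_mul, hw'.1.2, one_mul]
  rw [val]
  refine hle.trans ?_
  rw [htr]
  have : ((t : ℝ) - 1)⁻¹ * (n * ∑ s, w' s * qSeq S s xstar) ≤
      ((t : ℝ) - 1)⁻¹ * (n * yStar p t S) := by gcongr
  refine this.trans (le_of_eq ?_)
  rw [div_eq_mul_inv]
  ring
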